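/- arXiv:2202.04061 — 2 statements merged into one kernel-verified Lean document; each statement's English description precedes it below -/
import Mathlib

section
/- (Properties of the off-diagonal block of Σ^{1/2}.) Let Σ be a p×p positive semidefinite matrix with eigenvalues λ_1 ≥ … ≥ λ_p ≥ 0 whose top k orthonormal eigenvectors are supported on an index set J of size s. Then the block (Σ^{1/2})_{JJ^c} of its positive semidefinite square root satisfies ‖(Σ^{1/2})_{JJ^c}‖ ≤ 2√λ_1, its transpose annihilates U_J, i.e. ((Σ^{1/2})_{JJ^c})ᵀ U_J = 0, it has rank at most s − k, and the column space of the right singular vectors of ((Σ^{1/2})_{JJ^c})ᵀ (equivalently, the left singular subspace of (Σ^{1/2})_{JJ^c}) is contained in the span of U_⊥, the orthogonal complement of U_J in ℝ^s. -/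
/-!
If `S u = c² u` with `c ≥ 0` and `R` is the positive semidefinite square root of `S`, then
`R u = c u`: the vector `w = R u - c u` satisfies `(R + c) w = 0`, which forces `w = 0` when
`c > 0`, while for `c = 0` one has `‖R u‖² = uᵀ S u = 0`
(`mulVec_eq_of_sq_mulVec_eq`). Hence each top eigenvector `u`, being supported on `J`, has
`R u` supported on `J` too; reading the rows of `R u` indexed by `Jᶜ` and using the symmetry of `R`
gives `(R_{JJᶜ})ᵀ U_J = 0`.

Since `[U_J, U_⊥]` is orthogonal, `U_J U_Jᵀ + U_⊥ U_⊥ᵀ = 1`, so `R_{JJᶜ} = U_⊥ (U_⊥ᵀ R_{JJᶜ})`.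
This factorization gives both the rank bound and the containment of the column space in the span of
the columns of `U_⊥`.

The norm bound holds even without the factor `2`: `R_{JJᶜ} = Eᵀ R F` with `E`, `F` having
orthonormal columns, and `‖R‖² = ‖R²‖ = ‖S‖ ≤ λ₁` by the C⋆-identity.
-/

open MeasureTheory ProbabilityTheory Matrix

noncomputable section

/-- The ψ_α Orlicz norm of a real random variable (as defined in the paper). -/
def psiNorm {Ω : Type*} [MeasurableSpace Ω] (μ : Measure Ω) (α : ℝ) (X : Ω → ℝ) : ℝ :=
  sInf {t : ℝ | 0 < t ∧ ∫ ω, Real.exp (|X ω| ^ α / t) ∂μ ≤ 1}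

/-- The `2→∞` norm of a matrix: the maximum Euclidean row norm. -/
def twoInf {m k : ℕ} (M : Matrix (Fin m) (Fin k) ℝ) : ℝ :=
  ⨆ i, Real.sqrt (∑ j, M i j ^ 2)

/-- The ℓ₂ operator (spectral) norm of a matrix. -/
def specNorm {m k : ℕ} (M : Matrix (Fin m) (Fin k) ℝ) : ℝ :=
  ‖LinearMap.toContinuousLinearMap (Matrix.toEuclideanLin M)‖

/-- The Frobenius norm of a matrix. -/
def frobNorm {m k : ℕ} (M : Matrix (Fin m) (Fin k) ℝ) : ℝ :=
  Real.sqrt (∑ i, ∑ j, M i j ^ 2)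

/-- The maximum-entry norm of a matrix. -/
def maxNorm {m k : ℕ} (M : Matrix (Fin m) (Fin k) ℝ) : ℝ :=
  ⨆ i, ⨆ j, |M i j|

/-- The sample covariance matrix of `n` observations in `ℝ^p`. -/
def sampleCov {n p : ℕ} (X : Fin n → Fin p → ℝ) : Matrix (Fin p) (Fin p) ℝ :=
  (n : ℝ)⁻¹ • ∑ i, Matrix.vecMulVec (X i) (X i)

/-- `W` is a `d × k` matrix whose columns are orthonormal eigenvectors of the symmetric
matrix `M` corresponding to its `k` largest eigenvalues `lamW` (eigenvalues in
decreasing order): `W` consists of the first `k` columns of a full orthogonal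
eigenbasis of `M` with decreasing eigenvalues. -/
def IsTopEig {d k : ℕ} (hk : k ≤ d) (M : Matrix (Fin d) (Fin d) ℝ)
    (W : Matrix (Fin d) (Fin k) ℝ) (lamW : Fin k → ℝ) : Prop :=
  ∃ (V : Matrix (Fin d) (Fin d) ℝ) (ev : Fin d → ℝ),
    Vᵀ * V = 1 ∧ M = V * Matrix.diagonal ev * Vᵀ ∧ Antitone ev ∧
    (∀ i j, W i j = V i (Fin.castLE hk j)) ∧ ∀ j, lamW j = ev (Fin.castLE hk j)

/-- A positive semidefinite matrix acts on the eigenvectors of its square by the nonnegative square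
root of the eigenvalue. -/
lemma mulVec_eq_of_sq_mulVec_eq {n : Type*} [Fintype n] [DecidableEq n]
    {R : Matrix n n ℝ} (hR : R.PosSemidef) {u : n → ℝ} {c : ℝ} (hc : 0 ≤ c)
    (h : (R * R) *ᵥ u = (c * c) • u) : R *ᵥ u = c • u := by
  have hsymm : Rᵀ = R := by simpa using hR.1.eq
  rcases hc.eq_or_lt with rfl | hc
  · have h0 : (R *ᵥ u) ⬝ᵥ (R *ᵥ u) = 0 := by
      rw [dotProduct_mulVec, ← mulVec_transpose, hsymm, mulVec_mulVec, h]
      simp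
    simpa using dotProduct_self_eq_zero.mp h0
  · have hw : R *ᵥ (R *ᵥ u - c • u) = -(c • (R *ᵥ u - c • u)) := by
      rw [mulVec_sub, mulVec_mulVec, h, mulVec_smul, smul_sub, smul_smul]
      abel
    have h1 := hR.dotProduct_mulVec_nonneg (R *ᵥ u - c • u)
    rw [hw] at h1
    simp only [star_trivial, dotProduct_neg, dotProduct_smul, smul_eq_mul] at h1
    have h2 : 0 ≤ (R *ᵥ u - c • u) ⬝ᵥ (R *ᵥ u - c • u) :=
      Finset.sum_nonneg fun i _ => mul_self_nonneg _
    have h3 : (R *ᵥ u - c • u) ⬝ᵥ (R *ᵥ u - c • u) = 0 := by nlinarith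
    exact sub_eq_zero.mp (dotProduct_self_eq_zero.mp h3)

open scoped Matrix.Norms.L2Operator in
lemma l2_opNorm_le_one_of_transpose_mul_self {m n : Type*} [Fintype m] [Fintype n]
    [DecidableEq m] [DecidableEq n] {A : Matrix m n ℝ} (h : Aᵀ * A = 1) : ‖A‖ ≤ 1 := by
  have h1 := l2_opNorm_conjTranspose_mul_self A
  rw [conjTranspose_eq_transpose_of_trivial, h, ← diagonal_one, l2_opNorm_diagonal] at h1
  have h2 : ‖(fun _ => 1 : n → ℝ)‖ ≤ 1 :=
    (pi_norm_le_iff_of_nonneg zero_le_one).mpr fun i => by simp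
  nlinarith [norm_nonneg A]

open scoped Matrix.Norms.L2Operator in
lemma l2_opNorm_transpose {m n : Type*} [Fintype m] [Fintype n]
    [DecidableEq m] [DecidableEq n] (A : Matrix m n ℝ) : ‖Aᵀ‖ = ‖A‖ := by
  rw [← conjTranspose_eq_transpose_of_trivial, l2_opNorm_conjTranspose]

open scoped Matrix.Norms.L2Operator in
/-- A compression `Aᵀ * M * B` by matrices with orthonormal columns does not increase the
spectral norm. -/
lemma l2_opNorm_compress_le {m n k l : Type*} [Fintype m] [Fintype n] [Fintype k] [Fintype l]
    [DecidableEq m] [DecidableEq n] [DecidableEq k] [DecidableEq l]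
    {A : Matrix m k ℝ} {B : Matrix n l ℝ} (hA : Aᵀ * A = 1) (hB : Bᵀ * B = 1)
    (M : Matrix m n ℝ) : ‖Aᵀ * M * B‖ ≤ ‖M‖ := by
  have hA' := l2_opNorm_le_one_of_transpose_mul_self hA
  have hB' := l2_opNorm_le_one_of_transpose_mul_self hB
  calc ‖Aᵀ * M * B‖ ≤ ‖Aᵀ‖ * ‖M‖ * ‖B‖ :=
        (l2_opNorm_mul _ _).trans (by gcongr; exact l2_opNorm_mul _ _)
    _ ≤ 1 * ‖M‖ * 1 := by rw [l2_opNorm_transpose]; gcongr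
    _ = ‖M‖ := by ring

lemma transpose_mul_self_one_submatrix {m n : Type*} [Fintype m] [DecidableEq m] [DecidableEq n]
    {f : n → m} (hf : Function.Injective f) :
    ((1 : Matrix m m ℝ).submatrix id f)ᵀ * (1 : Matrix m m ℝ).submatrix id f = 1 := by
  ext a b
  simp [mul_apply, one_apply, hf.eq_iff]

/-- **Proposition (Properties of the matrix `(Σ^{1/2})_{JJᶜ}`).** -/
theorem sqrt_offdiagonal_block_properties
    (p k s : ℕ) (hp : 0 < p) (hk : 0 < k) (hks : k ≤ s) (hsp : s ≤ p) (hkp : k < p)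
    (S R : Matrix (Fin p) (Fin p) ℝ) (hSpsd : S.PosSemidef)
    (hR : R.PosSemidef) (hRS : R * R = S)
    (lam : Fin p → ℝ) (V : Matrix (Fin p) (Fin p) ℝ)
    (hV : Vᵀ * V = 1) (hSeig : S = V * Matrix.diagonal lam * Vᵀ)
    (hlam : Antitone lam) (hlam0 : ∀ i, 0 ≤ lam i)
    (U : Matrix (Fin p) (Fin k) ℝ) (hU : ∀ i j, U i j = V i (Fin.castLE (le_of_lt hkp) j))
    (jmap : Fin s → Fin p) (hjmap : StrictMono jmap)
    (hsupp : ∀ i, (∀ a, i ≠ jmap a) → ∀ j, U i j = 0)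
    (UJ : Matrix (Fin s) (Fin k) ℝ) (hUJ : UJ = U.submatrix jmap id)
    (jc : Fin (p - s) → Fin p) (hjc : StrictMono jc)
    (hdisj : ∀ a b, jmap a ≠ jc b)
    (hcover : ∀ i, (∃ a, i = jmap a) ∨ (∃ b, i = jc b))
    (Uperp : Matrix (Fin s) (Fin (s - k)) ℝ)
    (hUJorth : UJᵀ * UJ = 1) (hUperpOrth : Uperpᵀ * Uperp = 1)
    (hperp : UJᵀ * Uperp = 0) :
    specNorm (R.submatrix jmap jc) ≤ 2 * Real.sqrt (lam ⟨0, hp⟩) ∧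
    (R.submatrix jmap jc)ᵀ * UJ = 0 ∧
    (R.submatrix jmap jc).rank ≤ s - k ∧
    ∀ v : Fin (p - s) → ℝ, (R.submatrix jmap jc).mulVec v ∈
      Submodule.span ℝ (Set.range fun j : Fin (s - k) => fun i => Uperp i j) := by
  have hsymm : Rᵀ = R := by simpa using hR.1.eq
  -- The columns of `U` are eigenvectors of `R` with eigenvalues `√λ_j`.
  have hRU : ∀ j : Fin k, R *ᵥ (fun i => U i j) =
      Real.sqrt (lam (Fin.castLE (le_of_lt hkp) j)) • fun i => U i j := by
    intro j
    apply mulVec_eq_of_sq_mulVec_eq hR (Real.sqrt_nonneg _)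
    rw [Real.mul_self_sqrt (hlam0 _), hRS, hSeig]
    have hcol : (fun i => U i j) = V *ᵥ Pi.single (Fin.castLE (le_of_lt hkp) j) 1 := by
      ext i
      simp [hU]
    rw [hcol, mulVec_mulVec, Matrix.mul_assoc, hV, Matrix.mul_one, ← mulVec_mulVec,
      ← mulVec_smul]
    congr 1
    ext i
    simp [Pi.single_apply]
  have hzero : (R.submatrix jmap jc)ᵀ * UJ = 0 := by
    ext b j
    have hb : U (jc b) j = 0 := hsupp _ (fun a h => hdisj a b h.symm) j
    have h1 := congrFun (hRU j) (jc b)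
    simp only [mulVec, dotProduct, Pi.smul_apply, hb, smul_zero] at h1
    rw [Matrix.zero_apply, ← h1, hUJ]
    simp only [mul_apply, transpose_apply, submatrix_apply, id_eq]
    refine Finset.sum_of_injOn jmap hjmap.injective.injOn (fun _ _ => Finset.mem_univ _) ?_ ?_
    · intro i _ hi
      rw [hsupp i (fun a h => hi ⟨a, by simp, h.symm⟩) j, mul_zero]
    · intro a _
      rw [← congrFun (congrFun hsymm (jc b)) (jmap a), transpose_apply]
  have hfact : R.submatrix jmap jc = Uperp * (Uperpᵀ * R.submatrix jmap jc) := by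
    have hone : fromRows UJᵀ Uperpᵀ * fromCols UJ Uperp = 1 := by
      have hperp' : Uperpᵀ * UJ = 0 := by
        simpa using congrArg Matrix.transpose hperp
      rw [fromRows_mul_fromCols, hUJorth, hUperpOrth, hperp, hperp', fromBlocks_one]
    have hsum : fromCols UJ Uperp * fromRows UJᵀ Uperpᵀ = 1 :=
      (mul_eq_one_comm_of_card_eq _ _ _ (by simp; omega)).mp hone
    rw [fromCols_mul_fromRows] at hsum
    have hz : UJᵀ * R.submatrix jmap jc = 0 := by
      simpa using congrArg Matrix.transpose hzero
    calc R.submatrix jmap jc = (UJ * UJᵀ + Uperp * Uperpᵀ) * R.submatrix jmap jc := by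
          rw [hsum, Matrix.one_mul]
      _ = _ := by rw [Matrix.add_mul, Matrix.mul_assoc, hz, Matrix.mul_zero, zero_add,
          Matrix.mul_assoc]
  refine ⟨?_, hzero, ?_, ?_⟩
  · open scoped Matrix.Norms.L2Operator in
    have hS : ‖S‖ ≤ lam ⟨0, hp⟩ := by
      have hVt : Vᵀᵀ * Vᵀ = 1 := by rw [transpose_transpose]; exact mul_eq_one_comm.mp hV
      have h1 := l2_opNorm_compress_le hVt hVt (Matrix.diagonal lam)
      rw [transpose_transpose, ← hSeig, l2_opNorm_diagonal] at h1
      refine h1.trans ((pi_norm_le_iff_of_nonneg (hlam0 _)).mpr fun i => ?_)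
      rw [Real.norm_of_nonneg (hlam0 i)]
      exact hlam (Fin.mk_le_of_le_val (Nat.zero_le _))
    have hRn : ‖R‖ ≤ Real.sqrt (lam ⟨0, hp⟩) := by
      apply Real.le_sqrt_of_sq_le
      rw [sq, ← l2_opNorm_conjTranspose_mul_self, hR.1.eq, hRS]
      exact hS
    have hsub : R.submatrix jmap jc = ((1 : Matrix (Fin p) (Fin p) ℝ).submatrix id jmap)ᵀ * R *
        (1 : Matrix (Fin p) (Fin p) ℝ).submatrix id jc := by
      ext a b
      simp [mul_apply, one_apply]
    have hle : ‖R.submatrix jmap jc‖ ≤ ‖R‖ := by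
      rw [hsub]
      exact l2_opNorm_compress_le (transpose_mul_self_one_submatrix hjmap.injective)
        (transpose_mul_self_one_submatrix hjc.injective) R
    have hspec : specNorm (R.submatrix jmap jc) = ‖R.submatrix jmap jc‖ := rfl
    rw [hspec]
    linarith [Real.sqrt_nonneg (lam ⟨0, hp⟩)]
  · rw [hfact]
    exact (rank_mul_le_left _ _).trans (rank_le_width _)
  · intro v
    rw [hfact, ← mulVec_mulVec]
    rw [mulVec_eq_sum]
    refine Submodule.sum_mem _ fun j _ => ?_
    rw [op_smul_eq_smul]
    exact Submodule.smul_mem _ _ (Submodule.subset_span ⟨j, rfl⟩)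
end
end

section
/- (Procrustes alignment is quadratically close to U^T Ũ.) Let U and Ũ be p×k matrices with orthonormal columns and let W_* := argmin_{W ∈ O(k)} ‖Ũ − U W‖_F (given via the singular value decomposition of Uᵀ Ũ = W_1 D W_2ᵀ as W_* = W_1 W_2ᵀ). Then ‖W_* − Uᵀ Ũ‖ ≤ ‖U Uᵀ − Ũ Ũᵀ‖², where ‖·‖ is the spectral norm. -/
/-!
Put `M = Uᵀ Ũ` and `H = Wᵀ M`. Expanding the Frobenius norm, minimality of `W` says exactly that
`tr (Q H) ≤ tr H` for every orthogonal `Q`. Testing this against Householder reflections shows that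
the quadratic form of `H` is nonnegative, and testing it against products of two reflections shows
that `H` is symmetric; thus `M = W H` is a polar decomposition, and no singular value decomposition
is needed.

Consequently `1 - Mᵀ M = 1 - H² = (1 + H) (1 - H)`, where `1 + H` does not shrink any vector because
`H` is positive semidefinite, so `‖W - M‖ = ‖W (1 - H)‖ ≤ ‖1 - H‖ ≤ ‖1 - Mᵀ M‖`. Finally
`1 - Mᵀ M = Ũᵀ Δ Δ Ũ` with `Δ = U Uᵀ - Ũ Ũᵀ`, which has norm at most `‖Δ‖²`.
-/

open MeasureTheory ProbabilityTheory Matrix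

noncomputable section

open scoped Matrix.Norms.L2Operator

lemma specNorm_eq_norm {m k : ℕ} (M : Matrix (Fin m) (Fin k) ℝ) : specNorm M = ‖M‖ := rfl

lemma frobNorm_sq {m k : ℕ} (M : Matrix (Fin m) (Fin k) ℝ) :
    frobNorm M ^ 2 = (Mᵀ * M).trace := by
  unfold frobNorm
  rw [Real.sq_sqrt (by positivity), Finset.sum_comm]
  simp [Matrix.trace, Matrix.mul_apply, sq]

/-- The Householder reflection in the hyperplane orthogonal to `u`; it is meaningful only for
`u ≠ 0`. -/
def householder {k : ℕ} (u : Fin k → ℝ) : Matrix (Fin k) (Fin k) ℝ :=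
  1 - (2 / (u ⬝ᵥ u)) • vecMulVec u u

lemma householder_transpose {k : ℕ} (u : Fin k → ℝ) : (householder u)ᵀ = householder u := by
  simp [householder, transpose_vecMulVec]

lemma householder_mul_self {k : ℕ} (u : Fin k → ℝ) (hu : u ⬝ᵥ u ≠ 0) :
    householder u * householder u = 1 := by
  simp only [householder, sub_mul, mul_sub, one_mul, mul_one, smul_mul_assoc, mul_smul_comm,
    vecMulVec_mul_vecMulVec, vecMulVec_smul, smul_smul]
  rw [smul_sub, smul_smul, sub_sub, ← add_sub_assoc, ← add_smul, ← sub_smul]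
  have : 2 / u ⬝ᵥ u + 2 / u ⬝ᵥ u - 2 / u ⬝ᵥ u * (2 / u ⬝ᵥ u * u ⬝ᵥ u) = 0 := by
    field_simp; ring
  simp [this]

lemma trace_vecMulVec_mul {k : ℕ} (u v : Fin k → ℝ) (H : Matrix (Fin k) (Fin k) ℝ) :
    (vecMulVec u v * H).trace = v ⬝ᵥ H *ᵥ u := by
  rw [vecMulVec_mul, trace_vecMulVec, dotProduct_comm, dotProduct_mulVec]

lemma trace_householder_mul {k : ℕ} (u : Fin k → ℝ) (H : Matrix (Fin k) (Fin k) ℝ) :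
    (householder u * H).trace = H.trace - 2 / (u ⬝ᵥ u) * (u ⬝ᵥ H *ᵥ u) := by
  simp [householder, sub_mul, trace_vecMulVec_mul]

lemma trace_householder_mul_householder_mul {k : ℕ} (u v : Fin k → ℝ)
    (H : Matrix (Fin k) (Fin k) ℝ) :
    (householder u * householder v * H).trace =
      H.trace - 2 / (u ⬝ᵥ u) * (u ⬝ᵥ H *ᵥ u) - 2 / (v ⬝ᵥ v) * (v ⬝ᵥ H *ᵥ v)
        + 2 / (u ⬝ᵥ u) * (2 / (v ⬝ᵥ v)) * (u ⬝ᵥ v) * (v ⬝ᵥ H *ᵥ u) := by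
  simp only [householder, sub_mul, mul_sub, one_mul, mul_one, smul_mul_assoc, mul_smul_comm,
    vecMulVec_mul_vecMulVec, vecMulVec_smul, smul_smul, trace_sub, trace_smul, trace_vecMulVec_mul,
    smul_eq_mul]
  ring

lemma dotProduct_mulVec_nonneg_of_trace_le {k : ℕ} (H : Matrix (Fin k) (Fin k) ℝ)
    (hH : ∀ Q : Matrix (Fin k) (Fin k) ℝ, Qᵀ * Q = 1 → (Q * H).trace ≤ H.trace)
    (u : Fin k → ℝ) : 0 ≤ u ⬝ᵥ H *ᵥ u := by
  by_cases hu : u ⬝ᵥ u = 0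
  · simp [dotProduct_self_eq_zero.mp hu]
  · have h := hH (householder u) (by rw [householder_transpose, householder_mul_self u hu])
    rw [trace_householder_mul] at h
    have h0 : 0 < u ⬝ᵥ u := lt_of_le_of_ne
      (Finset.sum_nonneg fun i _ => mul_self_nonneg (u i)) (Ne.symm hu)
    have h2 : 0 ≤ 2 / (u ⬝ᵥ u) * (u ⬝ᵥ H *ᵥ u) := by linarith
    exact nonneg_of_mul_nonneg_right h2 (by positivity)

/-- For an orthonormal pair `x, y`, the reflections along `x` and `x + t y` compose to a rotation
by an angle of order `t`; the first-order term in `t` of the trace inequality forces the antisymmetric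
part of `H` to vanish. -/
lemma transpose_eq_of_trace_le {k : ℕ} (H : Matrix (Fin k) (Fin k) ℝ)
    (hH : ∀ Q : Matrix (Fin k) (Fin k) ℝ, Qᵀ * Q = 1 → (Q * H).trace ≤ H.trace) :
    Hᵀ = H := by
  have key : ∀ i j, i ≠ j → ∀ t : ℝ, t * (H j i - H i j) ≤ t ^ 2 * (H i i + H j j) := by
    intro i j hij t
    set x : Fin k → ℝ := Pi.single i 1 with hx
    set y : Fin k → ℝ := Pi.single j 1 with hy
    have hxx : x ⬝ᵥ x = 1 := by simp [hx]
    have hyy : y ⬝ᵥ y = 1 := by simp [hy]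
    have hxy : x ⬝ᵥ y = 0 := by simp [hx, hy, hij]
    have hyx : y ⬝ᵥ x = 0 := by rw [dotProduct_comm, hxy]
    have huv : x ⬝ᵥ (x + t • y) = 1 := by simp [hxx, hxy]
    have hvv : (x + t • y) ⬝ᵥ (x + t • y) = 1 + t ^ 2 := by
      simp [hxx, hxy, hyx, hyy]; ring
    have hpos : (0 : ℝ) < 1 + t ^ 2 := by positivity
    have h := hH (householder x * householder (x + t • y)) (by
      rw [transpose_mul, householder_transpose, householder_transpose, Matrix.mul_assoc,
        ← Matrix.mul_assoc (householder x), householder_mul_self x (by simp [hxx]), Matrix.one_mul,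
        householder_mul_self _ (by rw [hvv]; exact hpos.ne')])
    rw [trace_householder_mul_householder_mul, hxx, hvv, huv] at h
    have e1 : x ⬝ᵥ H *ᵥ x = H i i := by simp [hx]
    have e2 : y ⬝ᵥ H *ᵥ x = H j i := by simp [hx, hy]
    have e3 : x ⬝ᵥ H *ᵥ y = H i j := by simp [hx, hy]
    have e4 : y ⬝ᵥ H *ᵥ y = H j j := by simp [hy]
    simp only [mulVec_add, mulVec_smul, add_dotProduct, dotProduct_add, smul_dotProduct,
      dotProduct_smul, smul_eq_mul, e1, e2, e3, e4] at h
    field_simp at h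
    nlinarith
  ext i j
  rw [transpose_apply]
  by_cases hij : i = j
  · rw [hij]
  · set d := H j i - H i j with hd
    set s := H i i + H j j with hs
    have h : ∀ t : ℝ, t * d ≤ t ^ 2 * s := key i j hij
    -- `t = d / (1 + |s|)` is small enough for the linear term to beat the quadratic one.
    have h1 := h (d / (1 + |s|))
    have hp : 0 < 1 + |s| := by positivity
    have h2 : d ^ 2 * (1 + |s|) ≤ d ^ 2 * s := by
      field_simp at h1
      linarith
    have h3 : d ^ 2 = 0 := by nlinarith [le_abs_self s, sq_nonneg d]
    have h4 : d = 0 := by simpa using h3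
    linarith

lemma trace_le_of_minimal {p k : ℕ} (U Ut : Matrix (Fin p) (Fin k) ℝ)
    (hUorth : Uᵀ * U = 1) (W : Matrix (Fin k) (Fin k) ℝ) (hWorth : Wᵀ * W = 1)
    (hWmin : ∀ W' : Matrix (Fin k) (Fin k) ℝ, W'ᵀ * W' = 1 →
      frobNorm (Ut - U * W) ≤ frobNorm (Ut - U * W'))
    (Q : Matrix (Fin k) (Fin k) ℝ) (hQ : Qᵀ * Q = 1) :
    (Q * (Wᵀ * (Uᵀ * Ut))).trace ≤ (Wᵀ * (Uᵀ * Ut)).trace := by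
  have expand : ∀ V : Matrix (Fin k) (Fin k) ℝ, Vᵀ * V = 1 →
      frobNorm (Ut - U * V) ^ 2 =
        (Utᵀ * Ut).trace + (1 : Matrix (Fin k) (Fin k) ℝ).trace
          - 2 * (Vᵀ * (Uᵀ * Ut)).trace := by
    intro V hV
    have h1 : (U * V)ᵀ * (U * V) = 1 := by
      rw [transpose_mul, Matrix.mul_assoc, ← Matrix.mul_assoc Uᵀ, hUorth, Matrix.one_mul, hV]
    have h2 : (Utᵀ * (U * V)).trace = (Vᵀ * (Uᵀ * Ut)).trace := by
      rw [← trace_transpose]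
      simp [Matrix.mul_assoc]
    rw [frobNorm_sq, transpose_sub, Matrix.sub_mul, Matrix.mul_sub, Matrix.mul_sub, h1, trace_sub,
      trace_sub, trace_sub, h2, transpose_mul, Matrix.mul_assoc]
    ring
  have hQ' : Q * Qᵀ = 1 := mul_eq_one_comm.mp hQ
  have hV : (W * Qᵀ)ᵀ * (W * Qᵀ) = 1 := by
    rw [transpose_mul, transpose_transpose, Matrix.mul_assoc, ← Matrix.mul_assoc Wᵀ, hWorth,
      Matrix.one_mul, hQ']
  have h := pow_le_pow_left₀ (Real.sqrt_nonneg _) (hWmin _ hV) 2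
  change frobNorm _ ^ 2 ≤ _ at h
  rw [expand W hWorth, expand _ hV, transpose_mul, transpose_transpose, Matrix.mul_assoc Q] at h
  linarith

lemma norm_le_one_of_orthonormal {m k : ℕ} (A : Matrix (Fin m) (Fin k) ℝ) (hA : Aᵀ * A = 1) :
    ‖A‖ ≤ 1 := by
  have h := Matrix.l2_opNorm_conjTranspose_mul_self A
  rw [conjTranspose_eq_transpose_of_trivial, hA] at h
  have h1 : ‖(1 : Matrix (Fin k) (Fin k) ℝ)‖ ≤ 1 := by
    rw [Matrix.l2_opNorm_def]
    refine ContinuousLinearMap.opNorm_le_bound _ zero_le_one fun x => ?_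
    simp
  nlinarith [norm_nonneg A]

/-- `1 + H` expands lengths when the quadratic form of `H` is nonnegative. -/
lemma norm_one_sub_le {k : ℕ} (H : Matrix (Fin k) (Fin k) ℝ)
    (hH : ∀ u : Fin k → ℝ, 0 ≤ u ⬝ᵥ H *ᵥ u) : ‖1 - H‖ ≤ ‖1 - H * H‖ := by
  rw [Matrix.l2_opNorm_def (1 - H)]
  refine ContinuousLinearMap.opNorm_le_bound _ (norm_nonneg _) fun x => ?_
  refine le_trans ?_ (Matrix.l2_opNorm_mulVec (1 - H * H) x)
  change ‖WithLp.toLp 2 ((1 - H) *ᵥ x.ofLp)‖ ≤ _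
  have hfac : (1 - H * H) *ᵥ x.ofLp = (1 - H) *ᵥ x.ofLp + H *ᵥ ((1 - H) *ᵥ x.ofLp) := by
    rw [mulVec_mulVec, ← add_mulVec]
    congr 1
    noncomm_ring
  rw [hfac]
  generalize (1 - H) *ᵥ x.ofLp = w
  refine le_of_sq_le_sq ?_ (norm_nonneg _)
  rw [EuclideanSpace.real_norm_sq_eq, EuclideanSpace.real_norm_sq_eq]
  have h : ∑ i, (w + H *ᵥ w) i ^ 2
      = ∑ i, w i ^ 2 + 2 * (w ⬝ᵥ H *ᵥ w) + ∑ i, (H *ᵥ w) i ^ 2 := by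
    rw [dotProduct, Finset.mul_sum, ← Finset.sum_add_distrib, ← Finset.sum_add_distrib]
    refine Finset.sum_congr rfl fun i _ => ?_
    simp only [Pi.add_apply]
    ring
  have h0 : 0 ≤ ∑ i, (H *ᵥ w) i ^ 2 := by positivity
  have h1 := hH w
  change ∑ i, w i ^ 2 ≤ ∑ i, (w + H *ᵥ w) i ^ 2
  linarith

/-- **(Procrustes alignment is quadratically close to `Uᵀ Ũ`.)** -/
theorem procrustes_quadratically_close
    (p k : ℕ) (U Ut : Matrix (Fin p) (Fin k) ℝ)
    (hUorth : Uᵀ * U = 1) (hUtorth : Utᵀ * Ut = 1)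
    (W : Matrix (Fin k) (Fin k) ℝ) (hWorth : Wᵀ * W = 1)
    (hWmin : ∀ W' : Matrix (Fin k) (Fin k) ℝ, W'ᵀ * W' = 1 →
      frobNorm (Ut - U * W) ≤ frobNorm (Ut - U * W')) :
    specNorm (W - Uᵀ * Ut) ≤ specNorm (U * Uᵀ - Ut * Utᵀ) ^ 2 := by
  rw [specNorm_eq_norm, specNorm_eq_norm]
  have htr := trace_le_of_minimal U Ut hUorth W hWorth hWmin
  have hWW : W * Wᵀ = 1 := mul_eq_one_comm.mp hWorth
  set H := Wᵀ * (Uᵀ * Ut) with hHdef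
  have hsymm : Hᵀ = H := transpose_eq_of_trace_le H htr
  have hpsd := dotProduct_mulVec_nonneg_of_trace_le H htr
  have hpolar : W - Uᵀ * Ut = W * (1 - H) := by
    rw [Matrix.mul_sub, Matrix.mul_one, hHdef, ← Matrix.mul_assoc W, hWW, Matrix.one_mul]
  set D := U * Uᵀ - Ut * Utᵀ with hD
  have hDUt : D * Ut = U * (Uᵀ * Ut) - Ut := by
    rw [hD, Matrix.sub_mul, Matrix.mul_assoc, Matrix.mul_assoc, hUtorth, Matrix.mul_one]
  have hgram : 1 - H * H = (D * Ut)ᵀ * (D * Ut) := by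
    have h1 : H * H = Utᵀ * (U * (Uᵀ * Ut)) := by
      nth_rewrite 1 [← hsymm]
      rw [hHdef, transpose_mul, transpose_mul, transpose_transpose, transpose_transpose,
        Matrix.mul_assoc, ← Matrix.mul_assoc W, hWW, Matrix.one_mul, Matrix.mul_assoc]
    have h2 : Uᵀ * (U * (Uᵀ * Ut)) = Uᵀ * Ut := by
      rw [← Matrix.mul_assoc, hUorth, Matrix.one_mul]
    rw [h1, hDUt]
    simp only [transpose_sub, transpose_mul, transpose_transpose, Matrix.sub_mul, Matrix.mul_sub,
      Matrix.mul_assoc, h2, hUtorth]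
    abel
  have hUt1 := norm_le_one_of_orthonormal Ut hUtorth
  have hDUt_le : ‖D * Ut‖ ≤ ‖D‖ :=
    (Matrix.l2_opNorm_mul D Ut).trans (mul_le_of_le_one_right (norm_nonneg _) hUt1)
  calc ‖W - Uᵀ * Ut‖ = ‖W * (1 - H)‖ := by rw [hpolar]
    _ ≤ ‖W‖ * ‖1 - H‖ := Matrix.l2_opNorm_mul _ _
    _ ≤ ‖1 - H‖ := mul_le_of_le_one_left (norm_nonneg _) (norm_le_one_of_orthonormal W hWorth)
    _ ≤ ‖1 - H * H‖ := norm_one_sub_le H hpsd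
    _ = ‖D * Ut‖ * ‖D * Ut‖ := by
      rw [hgram, ← conjTranspose_eq_transpose_of_trivial,
        Matrix.l2_opNorm_conjTranspose_mul_self]
    _ ≤ ‖D‖ ^ 2 := by
      rw [← sq]
      exact pow_le_pow_left₀ (norm_nonneg _) hDUt_le 2
end
end
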